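/- For every real number x > 0, the series ∑_{k=1}^∞ ((-1)^k / k) · C(x,k) converges, and the digamma function at x+1 (i.e., the derivative of ln Γ at x+1, Γ'(x+1)/Γ(x+1)) equals -γ minus the sum of this series. -/

import Mathlib

/-- The generalized binomial coefficient `C(x, k) = x (x-1) ⋯ (x-k+1) / k!`. -/
noncomputable def genBinom (x : ℝ) (k : ℕ) : ℝ :=
  (∏ i ∈ Finset.range k, (x - i)) / (Nat.factorial k : ℝ)

open Set Filter Topology MeasureTheory in
lemma uniq_aux (F D : ℝ → ℝ) (hF : MonotoneOn F (Ici 0)) (hD : MonotoneOn D (Ici 0))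
    (hF1 : ∀ x, 0 ≤ x → F (x + 1) = F x + 1 / (x + 1))
    (hD1 : ∀ x, 0 ≤ x → D (x + 1) = D x + 1 / (x + 1)) (h0 : F 0 = D 0) (x : ℝ) (hx : 0 ≤ x) :
    F x = D x := by
  have hper : ∀ y, 0 ≤ y → ∀ n : ℕ, F (y + n) - D (y + n) = F y - D y := by
    intro y hy n
    induction n with
    | zero => simp
    | succ n ih =>
      have h : y + ((n + 1 : ℕ) : ℝ) = (y + n) + 1 := by push_cast; ring
      rw [h, hF1 _ (by positivity), hD1 _ (by positivity)]
      linarith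
  have hnat : ∀ n : ℕ, F n = D n := by
    intro n
    have := hper 0 le_rfl n
    rw [zero_add, h0] at this
    linarith
  have hb : ∀ n : ℕ, |F x - D x| ≤ 1 / ((n : ℝ) + 1) := by
    intro n
    set m : ℕ := ⌊x⌋₊ + n with hm
    have h1 : (m : ℝ) ≤ x + n := by
      have := Nat.floor_le hx
      rw [hm]; push_cast; linarith
    have h2 : x + n ≤ (m : ℝ) + 1 := by
      have := (Nat.lt_floor_add_one x).le
      rw [hm]; push_cast; linarith
    have hm0 : (0 : ℝ) ≤ m := Nat.cast_nonneg m
    have hxn : (0 : ℝ) ≤ x + n := by positivity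
    have a1 := hF (mem_Ici.2 hm0) (mem_Ici.2 hxn) h1
    have a2 := hF (mem_Ici.2 hxn) (mem_Ici.2 (by positivity)) h2
    have b1 := hD (mem_Ici.2 hm0) (mem_Ici.2 hxn) h1
    have b2 := hD (mem_Ici.2 hxn) (mem_Ici.2 (by positivity)) h2
    rw [hF1 _ hm0] at a2
    rw [hD1 _ hm0] at b2
    have hnm : 1 / ((m : ℝ) + 1) ≤ 1 / ((n : ℝ) + 1) := by
      apply one_div_le_one_div_of_le (by positivity)
      rw [hm]; push_cast
      have : (0 : ℝ) ≤ (⌊x⌋₊ : ℝ) := Nat.cast_nonneg _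
      linarith
    rw [← hper x hx n, abs_le]
    have := hnat m
    constructor <;> linarith
  have : |F x - D x| ≤ 0 :=
    ge_of_tendsto' tendsto_one_div_add_atTop_nhds_zero_nat hb
  have := abs_nonpos_iff.1 this
  linarith

open Set Filter Topology Real in
lemma psi_mono : MonotoneOn (fun x => deriv Gamma (x + 1) / Gamma (x + 1)) (Ici 0) := by
  have hder {x : ℝ} (hx : 0 < x) : DifferentiableAt ℝ (log ∘ Gamma) x := by
    refine ((differentiableAt_Gamma ?_).log (Gamma_ne_zero ?_)) <;>
    exact fun m ↦ ne_of_gt (by have : (0 : ℝ) ≤ m := Nat.cast_nonneg m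
                               linarith)
  have h := convexOn_log_Gamma.monotoneOn_deriv (fun x hx => hder hx)
  have e : ∀ x : ℝ, 0 ≤ x → deriv Gamma (x + 1) / Gamma (x + 1) = deriv (log ∘ Gamma) (x + 1) := by
    intro x hx
    rw [Function.comp_def, deriv.log (differentiableAt_Gamma (fun m ↦ ?_))
      (Gamma_pos_of_pos (by positivity)).ne']
    have : (0 : ℝ) ≤ m := Nat.cast_nonneg m
    linarith
  intro x hx y hy hxy
  simp only [mem_Ici] at hx hy
  simp only [e x hx, e y hy]
  exact h (mem_Ioi.2 (by positivity)) (mem_Ioi.2 (by positivity)) (by linarith)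

open Set Filter Topology Real in
lemma psi_rec (x : ℝ) (hx : 0 ≤ x) : deriv Gamma (x + 1 + 1) / Gamma (x + 1 + 1) =
    deriv Gamma (x + 1) / Gamma (x + 1) + 1 / (x + 1) := by
  have hx1 : 0 < x + 1 := by positivity
  have hd : DifferentiableAt ℝ Gamma (x + 1) := differentiableAt_Gamma fun m => by
    have : (0 : ℝ) ≤ m := Nat.cast_nonneg m
    linarith
  have h : deriv Gamma (x + 1 + 1) = Gamma (x + 1) + (x + 1) * deriv Gamma (x + 1) := by
    rw [← deriv_comp_add_const (f := Gamma)]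
    have : (fun y => Gamma (y + 1)) =ᶠ[𝓝 (x + 1)] fun y => y * Gamma y := by
      filter_upwards [eventually_gt_nhds hx1] with y hy
      exact Gamma_add_one hy.ne'
    rw [this.deriv_eq]
    have := ((hasDerivAt_id (x + 1)).mul hd.hasDerivAt).deriv
    simpa [Pi.mul_def] using this
  have hG := (Gamma_pos_of_pos hx1).ne'
  rw [h, Gamma_add_one hx1.ne']
  field_simp
  ring

lemma genBinom_succ (x : ℝ) (k : ℕ) :
    genBinom x (k + 1) = genBinom x k * ((x - k) / (k + 1)) := by
  unfold genBinom
  rw [Finset.prod_range_succ, Nat.factorial_succ]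
  have : (Nat.factorial k : ℝ) ≠ 0 := by positivity
  push_cast
  field_simp

lemma genBinom_eq_choose (x : ℝ) (k : ℕ) : genBinom x k = Ring.choose x k := by
  rw [Ring.choose_eq_smul, genBinom, div_eq_inv_mul, smul_eq_mul]
  congr 1
  rw [← Polynomial.aeval_eq_smeval, ← descPochhammer_eval_eq_prod_range,
    ← descPochhammer_map (Int.castRingHom ℝ), Polynomial.eval_map]
  rfl

lemma summable_abs_genBinom (x : ℝ) (hx : 0 < x) : Summable fun k => |genBinom x k| := by
  set K := ⌈x⌉₊
  rw [← summable_nat_add_iff K]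
  have hs : ∀ k : ℕ, x * |genBinom x (k + K)| =
      ((k + K : ℕ) : ℝ) * |genBinom x (k + K)|
        - ((k + 1 + K : ℕ) : ℝ) * |genBinom x (k + 1 + K)| := by
    intro k
    have hk : x ≤ ((k + K : ℕ) : ℝ) := by
      have := Nat.le_ceil x
      push_cast
      have : (0 : ℝ) ≤ k := Nat.cast_nonneg k
      linarith
    rw [show k + 1 + K = (k + K) + 1 by ring, genBinom_succ, abs_mul, abs_div,
      abs_of_nonpos (by linarith : x - ((k + K : ℕ) : ℝ) ≤ 0)]
    generalize k + K = j at *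
    have : |(j : ℝ) + 1| = j + 1 := abs_of_nonneg (by positivity)
    rw [this]
    push_cast
    field_simp
    ring
  apply summable_of_sum_range_le (c := ((K : ℝ) * |genBinom x K|) / x) (fun _ => abs_nonneg _)
  intro n
  rw [le_div_iff₀ hx, mul_comm, Finset.mul_sum, Finset.sum_congr rfl (fun k _ => hs k),
    Finset.sum_range_sub' (fun k => ((k + K : ℕ) : ℝ) * |genBinom x (k + K)|)]
  simp only [zero_add]
  have : 0 ≤ ((n + K : ℕ) : ℝ) * |genBinom x (n + K)| := by positivity
  linarith

lemma hasSum_binom (x u : ℝ) (hu : u ∈ Set.Ioo (0 : ℝ) 1) :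
    HasSum (fun k : ℕ => (-1) ^ k * genBinom x (k + 1) * u ^ k) ((1 - (1 - u) ^ x) / u) := by
  have h := (Real.one_add_rpow_hasFPowerSeriesOnBall_zero (a := x)).hasSum (y := -u) (by
    have : ‖-u‖ₑ < 1 := by
      rw [← ofReal_norm_eq_enorm, ENNReal.ofReal_lt_one, Real.norm_eq_abs, abs_neg,
        abs_of_pos hu.1]
      exact hu.2
    simpa using this)
  simp only [binomialSeries_apply, List.ofFn_const, List.prod_replicate, smul_eq_mul, zero_add,
    ← genBinom_eq_choose] at h
  have h2 := (hasSum_nat_add_iff' 1).2 h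
  simp only [Finset.sum_range_one, pow_zero, mul_one] at h2
  have h3 := h2.mul_left (-1 / u)
  have h0 : genBinom x 0 = 1 := by simp [genBinom]
  have hu0 : u ≠ 0 := hu.1.ne'
  have e1 : (fun k : ℕ => (-1) ^ k * genBinom x (k + 1) * u ^ k) =
      fun k : ℕ => -1 / u * (genBinom x (k + 1) * (-u) ^ (k + 1)) := by
    funext k
    rw [neg_pow u (k + 1), pow_succ u, pow_succ (-1 : ℝ)]
    field_simp
  have e2 : (1 - (1 - u) ^ x) / u = -1 / u * ((1 + -u) ^ x - genBinom x 0) := by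
    rw [h0, ← sub_eq_add_neg]
    field_simp
    ring
  rw [e1, e2]
  exact h3

noncomputable def sternInt (x : ℝ) : ℝ :=
  ∫ u in Set.Ioo (0 : ℝ) 1, (1 - (1 - u) ^ x) / u

open Set MeasureTheory in
lemma stern_integrable (x : ℝ) (hx : 0 ≤ x) :
    IntegrableOn (fun u : ℝ => (1 - (1 - u) ^ x) / u) (Ioo 0 1) := by
  refine Measure.integrableOn_of_bounded (M := max 1 x) (by simp) ?_ ?_
  · apply Measurable.aestronglyMeasurable
    fun_prop
  · filter_upwards [ae_restrict_mem measurableSet_Ioo] with u hu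
    have h1 : (1 - u) ^ x ≤ 1 := Real.rpow_le_one (by linarith [hu.2]) (by linarith [hu.1]) hx
    rw [Real.norm_eq_abs, abs_of_nonneg (div_nonneg (by linarith) hu.1.le), div_le_iff₀ hu.1]
    rcases le_total x 1 with h | h
    · have : (1 - u) ^ (1 : ℝ) ≤ (1 - u) ^ x :=
        Real.rpow_le_rpow_of_exponent_ge (by linarith [hu.2]) (by linarith [hu.1]) h
      rw [Real.rpow_one] at this
      have := mul_le_mul_of_nonneg_right (le_max_left 1 x) hu.1.le
      linarith
    · have h2 := one_add_mul_self_le_rpow_one_add (s := -u) (by linarith [hu.2]) h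
      rw [← sub_eq_add_neg] at h2
      have := mul_le_mul_of_nonneg_right (le_max_right 1 x) hu.1.le
      linarith

open Set MeasureTheory in
lemma stern_mono : MonotoneOn sternInt (Ici 0) := by
  intro x hx y hy hxy
  refine setIntegral_mono_on (stern_integrable x hx) (stern_integrable y hy)
    measurableSet_Ioo ?_
  intro u hu
  have : (1 - u) ^ y ≤ (1 - u) ^ x :=
    Real.rpow_le_rpow_of_exponent_ge (by linarith [hu.2]) (by linarith [hu.1]) hxy
  have := hu.1
  gcongr

open Set MeasureTheory in
lemma stern_rec (x : ℝ) (hx : 0 ≤ x) : sternInt (x + 1) = sternInt x + 1 / (x + 1) := by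
  rw [← sub_eq_iff_eq_add', sternInt, sternInt,
    ← integral_sub (stern_integrable _ (by positivity)) (stern_integrable x hx)]
  have : ∫ u in Ioo (0 : ℝ) 1, ((1 - (1 - u) ^ (x + 1)) / u - (1 - (1 - u) ^ x) / u) =
      ∫ u in Ioo (0 : ℝ) 1, (1 - u) ^ x := by
    apply setIntegral_congr_fun measurableSet_Ioo
    intro u hu
    have h1 : 0 < 1 - u := by linarith [hu.2]
    have h0 : u ≠ 0 := hu.1.ne'
    simp only
    rw [Real.rpow_add_one h1.ne']
    field_simp
    ring
  rw [this, ← integral_Ioc_eq_integral_Ioo, ← intervalIntegral.integral_of_le zero_le_one,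
    intervalIntegral.integral_comp_sub_left (fun u : ℝ => u ^ x), sub_self, sub_zero,
    integral_rpow (Or.inl (by linarith)), Real.one_rpow, Real.zero_rpow (by positivity), sub_zero]

open Set MeasureTheory in
lemma stern_hasSum (x : ℝ) (hx : 0 < x) :
    HasSum (fun k : ℕ => (-1) ^ k * genBinom x (k + 1) / ((k : ℝ) + 1)) (sternInt x) := by
  have hint : ∀ k : ℕ, ∫ u in Ioo (0 : ℝ) 1, u ^ k = 1 / ((k : ℝ) + 1) := by
    intro k
    rw [← integral_Ioc_eq_integral_Ioo, ← intervalIntegral.integral_of_le zero_le_one,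
      integral_pow]
    simp
  have hi : ∀ k : ℕ, Integrable (fun u : ℝ => (-1) ^ k * genBinom x (k + 1) * u ^ k)
      (volume.restrict (Ioo (0 : ℝ) 1)) := by
    intro k
    have : IntegrableOn (fun u : ℝ => (-1) ^ k * genBinom x (k + 1) * u ^ k) (Icc 0 1) :=
      Continuous.integrableOn_Icc (by fun_prop)
    exact this.mono_set Ioo_subset_Icc_self
  have hn : ∀ k : ℕ, ∫ u in Ioo (0 : ℝ) 1, ‖(-1) ^ k * genBinom x (k + 1) * u ^ k‖ =
      |genBinom x (k + 1)| * (1 / ((k : ℝ) + 1)) := by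
    intro k
    rw [← hint, ← integral_const_mul]
    apply setIntegral_congr_fun measurableSet_Ioo
    intro u hu
    simp [abs_of_pos hu.1]
  have hsum : Summable fun k : ℕ =>
      ∫ u in Ioo (0 : ℝ) 1, ‖(-1) ^ k * genBinom x (k + 1) * u ^ k‖ := by
    simp only [hn]
    refine Summable.of_nonneg_of_le (fun k => by positivity) (fun k => ?_)
      ((summable_nat_add_iff 1).2 (summable_abs_genBinom x hx))
    apply mul_le_of_le_one_right (abs_nonneg _)
    rw [div_le_one (by positivity)]
    have : (0 : ℝ) ≤ k := Nat.cast_nonneg k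
    linarith
  have h := hasSum_integral_of_summable_integral_norm hi hsum
  have e1 : (fun k : ℕ => (-1) ^ k * genBinom x (k + 1) / ((k : ℝ) + 1)) =
      fun k : ℕ => ∫ u in Ioo (0 : ℝ) 1, (-1) ^ k * genBinom x (k + 1) * u ^ k := by
    funext k
    rw [integral_const_mul, hint, mul_one_div]
  have e2 : sternInt x =
      ∫ u in Ioo (0 : ℝ) 1, ∑' k : ℕ, (-1) ^ k * genBinom x (k + 1) * u ^ k := by
    apply setIntegral_congr_fun measurableSet_Ioo
    intro u hu
    exact (hasSum_binom x u hu).tsum_eq.symm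
  rw [e1, e2]
  exact h

theorem stern_series_digamma (x : ℝ) (hx : 0 < x) :
    ∃ S : ℝ,
      Filter.Tendsto
        (fun N : ℕ => ∑ k ∈ Finset.Icc 1 N, ((-1) ^ k / (k : ℝ)) * genBinom x k)
        Filter.atTop (nhds S) ∧
      deriv Real.Gamma (x + 1) / Real.Gamma (x + 1) =
        -Real.eulerMascheroniConstant - S := by
  refine ⟨-sternInt x, ?_, ?_⟩
  · have h := (stern_hasSum x hx).neg.tendsto_sum_nat
    refine h.congr fun N => ?_
    induction N with
    | zero => simp
    | succ n ih =>
      rw [Finset.sum_range_succ, ih, Finset.sum_Icc_succ_top (by omega)]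
      congr 1
      push_cast
      rw [pow_succ]
      ring
  · have h := uniq_aux sternInt
      (fun x => deriv Real.Gamma (x + 1) / Real.Gamma (x + 1) + Real.eulerMascheroniConstant)
      stern_mono (psi_mono.add_const _) stern_rec
      (fun y hy => by rw [psi_rec y hy]; ring)
      (by simp [sternInt, Real.hasDerivAt_Gamma_one.deriv]) x hx.le
    linarith
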